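/- arXiv:1805.00260 — 2 statements merged into one kernel-verified Lean document; each statement's English description precedes it below -/
import Mathlib

section
/- For every integer r ≥ 2, if G is a (5,5r)-biregular bipartite graph, then r + 1 ≤ š(G) ≤ r³ + 1. -/
open SimpleGraph Finset

/-- A proper edge coloring of `G` with colors in `ℕ`: distinct edges of `G`
sharing an endpoint receive distinct colors. -/
def IsProperEdgeColoring {V : Type*} (G : SimpleGraph V) (c : Sym2 V → ℕ) : Prop :=
  ∀ e₁ ∈ G.edgeSet, ∀ e₂ ∈ G.edgeSet, e₁ ≠ e₂ → (∃ v, v ∈ e₁ ∧ v ∈ e₂) → c e₁ ≠ c e₂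

/-- The palette of a vertex `v`: the set of colors appearing on edges of `G` incident with `v`. -/
def palette {V : Type*} (G : SimpleGraph V) (c : Sym2 V → ℕ) (v : V) : Set ℕ :=
  {n | ∃ e ∈ G.edgeSet, v ∈ e ∧ c e = n}

/-- The palette index of `G`: the minimum number of distinct palettes occurring in a
proper edge coloring of `G`. -/
noncomputable def paletteIndex {V : Type*} (G : SimpleGraph V) : ℕ :=
  sInf {k | ∃ c : Sym2 V → ℕ, IsProperEdgeColoring G c ∧ (Set.range (palette G c)).ncard = k}

/-- `G` is `(a,b)`-biregular: bipartite with nonempty parts `(X, Y)` such that every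
vertex in `X` has degree `a` and every vertex in `Y` has degree `b`. -/
def IsBiregular {V : Type*} [Fintype V] (G : SimpleGraph V) [DecidableRel G.Adj] (a b : ℕ) : Prop :=
  ∃ X Y : Finset V, X.Nonempty ∧ Y.Nonempty ∧ Disjoint X Y ∧ (∀ v : V, v ∈ X ∨ v ∈ Y) ∧
    (∀ v w, G.Adj v w → (v ∈ X ∧ w ∈ Y) ∨ (v ∈ Y ∧ w ∈ X)) ∧
    (∀ v ∈ X, G.degree v = a) ∧ (∀ v ∈ Y, G.degree v = b)

/-!
Lower bound for an `(a, ar)`-biregular graph: at a vertex `y` of degree `ar` there are `ar` colours,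
each of which lies in the palette of a neighbour of `y`. Those palettes have `a` colours each, so at
least `r` of them are distinct, and the palette of `y` is one more.

Upper bound: splitting every vertex of degree `ar` into `r` vertices of degree `a` gives an
`a`-regular bipartite multigraph, whose Kőnig colouring splits `G` into `a` classes; each class has
degree `1` on `X` and `r` on `Y`. Two classes together form the edges of an `r`-regular bipartite
multigraph on two copies of `Y`, where `x ∈ X` is the edge joining its two neighbours. A Kőnig
colouring of that multigraph refines both classes by one and the same function `X → Fin r`. Grouping
the `a` classes into `⌈a / 2⌉` pairs (one possibly a singleton), the palette of `x` is determined by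
`⌈a / 2⌉` elements of `Fin r`, while every vertex of `Y` sees all `ar` colours.
-/

open Function

section KToOne

variable {E A B : Type*}

/-- Every fibre of `f` has exactly `k` elements. A bipartite multigraph is encoded by the two maps
sending an edge to its endpoints; then `IsKToOne k f` says that all vertices on the side of `f`
have degree `k`. For `k = 0` infinite fibres satisfy the condition too, as their `ncard` is `0`. -/
def IsKToOne (k : ℕ) (f : E → A) : Prop :=
  ∀ a, (f ⁻¹' {a}).ncard = k

variable {k : ℕ} {f : E → A} {g : E → B}

theorem IsKToOne.exists_bijective_prodMk [Finite E] (hf : IsKToOne k f) :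
    ∃ h : E → Fin k, Bijective fun e => (f e, h e) := by
  let fiberEquiv (a : A) : {e // f e = a} ≃ Fin k := Finite.equivFinOfCardEq (hf a)
  exact ⟨fun e => fiberEquiv (f e) ⟨e, rfl⟩, ((Equiv.sigmaFiberEquiv f).symm.trans
    ((Equiv.sigmaCongrRight fiberEquiv).trans (Equiv.sigmaEquivProd A (Fin k)))).bijective⟩

theorem bijOn_preimage_singleton_of_bijective_prodMk {C : Type*} {h : E → C}
    (hfh : Bijective fun e => (f e, h e)) (a : A) : Set.BijOn h (f ⁻¹' {a}) Set.univ := by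
  refine ⟨Set.mapsTo_univ _ _, fun e he e' he' heq => ?_, fun i _ => ?_⟩
  · exact hfh.injective (Prod.ext (he.trans he'.symm) heq)
  · obtain ⟨e, he⟩ := hfh.surjective (a, i)
    exact ⟨e, congrArg Prod.fst he, congrArg Prod.snd he⟩

theorem image_preimage_singleton_eq_range_of_bijective_prodMk {C D : Type*} {h : E → C}
    (hfh : Bijective fun e => (f e, h e)) (F : A → C → D) (a : A) :
    (fun e => F (f e) (h e)) '' (f ⁻¹' {a}) = Set.range (F a) := by
  calc (fun e => F (f e) (h e)) '' (f ⁻¹' {a}) = F a '' (h '' (f ⁻¹' {a})) := by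
        rw [Set.image_image]
        exact Set.image_congr fun e he => by rw [Set.mem_singleton_iff.1 he]
    _ = Set.range (F a) := by
        rw [(bijOn_preimage_singleton_of_bijective_prodMk hfh a).image_eq, Set.image_univ]

theorem isKToOne_of_bijective_prodMk {h : E → Fin k} (hfh : Bijective fun e => (f e, h e)) :
    IsKToOne k f := by
  intro a
  have hbij := bijOn_preimage_singleton_of_bijective_prodMk hfh a
  rw [← hbij.injOn.ncard_image, hbij.image_eq, Set.ncard_univ, Nat.card_fin]

theorem IsKToOne.surjective (hf : IsKToOne (k + 1) f) : Surjective f := by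
  intro a
  have hne : (f ⁻¹' {a}).ncard ≠ 0 := (hf a).trans_ne k.succ_ne_zero
  exact Set.nonempty_of_ncard_ne_zero hne

theorem IsKToOne.ncard_preimage [Finite E] (hf : IsKToOne k f) (s : Set A) :
    (f ⁻¹' s).ncard = s.ncard * k := by
  obtain ⟨h, hfh⟩ := hf.exists_bijective_prodMk
  calc (f ⁻¹' s).ncard = ((fun e => (f e, h e)) ⁻¹' (s ×ˢ Set.univ)).ncard := by
        rw [Set.mk_preimage_prod, Set.preimage_univ, Set.inter_univ]
    _ = (s ×ˢ (Set.univ : Set (Fin k))).ncard :=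
        Set.ncard_preimage_of_injective_subset_range hfh.injective
          (hfh.surjective.range_eq ▸ Set.subset_univ _)
    _ = s.ncard * k := by rw [Set.ncard_prod, Set.ncard_univ, Nat.card_fin]

theorem IsKToOne.exists_prodMk {r : ℕ} [Finite E] (hf : IsKToOne (k * r) f) :
    ∃ h : E → Fin r, IsKToOne k fun e => (f e, h e) := by
  obtain ⟨h, hfh⟩ := hf.exists_bijective_prodMk
  let split : A × Fin (k * r) ≃ (A × Fin r) × Fin k :=
    ((Equiv.refl A).prodCongr (finProdFinEquiv.symm.trans (Equiv.prodComm _ _))).trans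
      (Equiv.prodAssoc A (Fin r) (Fin k)).symm
  exact ⟨fun e => (split (f e, h e)).1.2,
    isKToOne_of_bijective_prodMk (h := fun e => (split (f e, h e)).2) (split.bijective.comp hfh)⟩

theorem IsKToOne.restrict_compl [Finite E] {M : Set E} (hf : IsKToOne (k + 1) f)
    (hM : Set.BijOn f M Set.univ) : IsKToOne k fun e : ↥Mᶜ => f e := by
  intro a
  obtain ⟨m, hm, rfl⟩ := hM.surjOn (Set.mem_univ a)
  have himage : Subtype.val '' ((fun e : ↥Mᶜ => f e) ⁻¹' {f m}) = f ⁻¹' {f m} \ {m} := by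
    ext e
    constructor
    · rintro ⟨e, hfe, rfl⟩
      exact ⟨hfe, fun hem => e.2 (Set.mem_singleton_iff.1 hem ▸ hm)⟩
    · rintro ⟨hfe, hem⟩
      exact ⟨⟨e, fun heM => hem (hM.injOn heM hm hfe)⟩, hfe, rfl⟩
  have hm_fiber : m ∈ f ⁻¹' {f m} := rfl
  rw [← Set.ncard_image_of_injective _ Subtype.val_injective, himage,
    Set.ncard_sdiff_singleton_of_mem hm_fiber, hf, Nat.add_sub_cancel]

theorem IsKToOne.ncard_le_ncard_image_preimage [Finite E] (hf : IsKToOne (k + 1) f)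
    (hg : IsKToOne (k + 1) g) (s : Set A) : s.ncard ≤ (g '' (f ⁻¹' s)).ncard := by
  refine Nat.le_of_mul_le_mul_right ?_ k.succ_pos
  rw [← hf.ncard_preimage, ← hg.ncard_preimage]
  exact Set.ncard_le_ncard (Set.subset_preimage_image g (f ⁻¹' s))

theorem IsKToOne.natCard_eq [Finite E] (hf : IsKToOne (k + 1) f) (hg : IsKToOne (k + 1) g) :
    Nat.card A = Nat.card B := by
  refine Nat.eq_of_mul_eq_mul_right k.succ_pos ?_
  rw [← Set.ncard_univ, ← Set.ncard_univ, ← hf.ncard_preimage, ← hg.ncard_preimage,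
    Set.preimage_univ, Set.preimage_univ]

theorem exists_perfect_matching [Finite E] (hf : IsKToOne (k + 1) f) (hg : IsKToOne (k + 1) g) :
    ∃ M : Set E, Set.BijOn f M Set.univ ∧ Set.BijOn g M Set.univ := by
  classical
  have := Finite.of_surjective f hf.surjective
  have := Finite.of_surjective g hg.surjective
  have := Fintype.ofFinite B
  have hall (s : Finset A) : #s ≤ #{b | ∃ a ∈ s, ∃ e, f e = a ∧ g e = b} := by
    have hnbhd : g '' (f ⁻¹' s) = ({b | ∃ a ∈ s, ∃ e, f e = a ∧ g e = b} : Finset B) := by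
      ext b
      simp
    rw [← Set.ncard_coe_finset, ← Set.ncard_coe_finset, ← hnbhd]
    exact hf.ncard_le_ncard_image_preimage hg s
  obtain ⟨m, hm, hedge⟩ := (Fintype.all_card_le_filter_rel_iff_exists_injective _).1 hall
  choose s hfs hgs using hedge
  have hsurj := ((Nat.bijective_iff_injective_and_card m).2 ⟨hm, hf.natCard_eq hg⟩).surjective
  refine ⟨Set.range s, ⟨Set.mapsTo_univ _ _, ?_, fun a _ => ⟨s a, ⟨a, rfl⟩, hfs a⟩⟩,
    ⟨Set.mapsTo_univ _ _, ?_, fun b _ => ?_⟩⟩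
  · rintro _ ⟨a, rfl⟩ _ ⟨a', rfl⟩ heq
    rw [← hfs a, heq, hfs]
  · rintro _ ⟨a, rfl⟩ _ ⟨a', rfl⟩ heq
    rw [hm ((hgs a).symm.trans (heq.trans (hgs a')))]
  · obtain ⟨a, rfl⟩ := hsurj b
    exact ⟨s a, ⟨a, rfl⟩, hgs a⟩

open Classical in
theorem bijective_prodMk_dite_last {M : Set E} {c : ↥Mᶜ → Fin k} (hM : Set.BijOn f M Set.univ)
    (hc : Bijective fun e : ↥Mᶜ => (f e, c e)) :
    Bijective fun e => (f e, if h : e ∈ M then Fin.last k else (c ⟨e, h⟩).castSucc) := by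
  constructor
  · intro e e' heq
    obtain ⟨hfe, hce⟩ := Prod.mk.inj heq
    by_cases he : e ∈ M <;> by_cases he' : e' ∈ M <;>
      simp only [he, he', dite_true, dite_false] at hce
    · exact hM.injOn he he' hfe
    · exact absurd hce (Fin.castSucc_lt_last _).ne'
    · exact absurd hce (Fin.castSucc_lt_last _).ne
    · exact congrArg Subtype.val (hc.injective (a₁ := ⟨e, he⟩) (a₂ := ⟨e', he'⟩)
        (Prod.ext hfe (Fin.castSucc_injective k hce)))
  · rintro ⟨a, i⟩
    induction i using Fin.lastCases with
    | last =>
      obtain ⟨e, he, rfl⟩ := hM.surjOn (Set.mem_univ a)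
      exact ⟨e, by simp only [he, dite_true]⟩
    | cast i =>
      obtain ⟨⟨e, he⟩, heq⟩ := hc.surjective (a, i)
      obtain ⟨rfl, rfl⟩ := Prod.mk.inj heq
      exact ⟨e, Prod.ext rfl (dif_neg he)⟩

/-- The edge colouring theorem of Kőnig for a `k`-regular bipartite multigraph: bijectivity of
`(f, c)` says that each of the `k` colours occurs exactly once at every vertex. -/
theorem exists_common_bijective_prodMk [Finite E] (hf : IsKToOne k f) (hg : IsKToOne k g) :
    ∃ c : E → Fin k, (Bijective fun e => (f e, c e)) ∧ Bijective fun e => (g e, c e) := by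
  classical
  induction k generalizing E with
  | zero =>
    obtain ⟨c, hfc⟩ := hf.exists_bijective_prodMk
    have : IsEmpty E := ⟨fun e => (c e).elim0⟩
    exact ⟨c, hfc, isEmptyElim, fun p => p.2.elim0⟩
  | succ k ih =>
    obtain ⟨M, hMf, hMg⟩ := exists_perfect_matching hf hg
    obtain ⟨c, hcf, hcg⟩ := ih (hf.restrict_compl hMf) (hg.restrict_compl hMg)
    exact ⟨_, bijective_prodMk_dite_last hMf hcf, bijective_prodMk_dite_last hMg hcg⟩

theorem exists_bijective_prodMk_and_isKToOne_prodMk {r : ℕ} [Finite E] (hf : IsKToOne k f)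
    (hg : IsKToOne (k * r) g) :
    ∃ c : E → Fin k, (Bijective fun e => (f e, c e)) ∧ IsKToOne r fun e => (g e, c e) := by
  obtain ⟨h, hgh⟩ := hg.exists_prodMk
  obtain ⟨c, hfc, hghc⟩ := exists_common_bijective_prodMk hf hgh
  let swap : (B × Fin r) × Fin k ≃ (B × Fin k) × Fin r :=
    { toFun p := ((p.1.1, p.2), p.1.2)
      invFun p := ((p.1.1, p.2), p.1.2) }
  exact ⟨c, hfc, isKToOne_of_bijective_prodMk (h := h) (swap.bijective.comp hghc)⟩

theorem exists_bijective_prodMk_of_pairing {ι J : Type*} [Finite E] {q : ι → E → A}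
    (hq : ∀ i, IsKToOne k (q i)) {b : ι → J} (hb : ∀ j, ∃ i₁ i₂, b ⁻¹' {j} ⊆ {i₁, i₂}) :
    ∃ d : E → J → Fin k, ∀ i, Bijective fun e => (q i e, d e (b i)) := by
  have hblock (j : J) : ∃ d : E → Fin k, ∀ i, b i = j → Bijective fun e => (q i e, d e) := by
    obtain ⟨i₁, i₂, hsub⟩ := hb j
    obtain ⟨d, h₁, h₂⟩ := exists_common_bijective_prodMk (hq i₁) (hq i₂)
    refine ⟨d, fun i hi => ?_⟩
    obtain rfl | rfl := hsub hi
    exacts [h₁, h₂]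
  choose d hd using hblock
  exact ⟨fun e j => d j e, fun i => hd (b i) i rfl⟩

theorem IsKToOne.comp_symm_prodMk {ι : Type*} {σ : E ≃ A × ι}
    (hg : IsKToOne k fun e => (g e, (σ e).2)) (i : ι) : IsKToOne k fun a => g (σ.symm (a, i)) := by
  intro y
  have hinj : Injective fun a => σ.symm (a, i) :=
    σ.symm.injective.comp (Prod.mk_left_injective i)
  have hpreimage : (fun a => g (σ.symm (a, i))) ⁻¹' {y} =
      (fun a => σ.symm (a, i)) ⁻¹' ((fun e => (g e, (σ e).2)) ⁻¹' {(y, i)}) := by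
    ext a
    simp
  rw [hpreimage, Set.ncard_preimage_of_injective_subset_range hinj, hg]
  rintro e he
  exact ⟨(σ e).1, σ.symm_apply_eq.2 (Prod.ext rfl (Prod.mk.inj he).2.symm)⟩

theorem exists_coloring_of_pairing {r : ℕ} {J : Type*} [Finite E] [Finite A] (hf : IsKToOne k f)
    (hg : IsKToOne (k * r) g) {b : Fin k → J} (hb : ∀ j, ∃ i₁ i₂, b ⁻¹' {j} ⊆ {i₁, i₂}) :
    ∃ (c : E → Fin k) (d : A → J → Fin r), (Bijective fun e => (f e, c e)) ∧
      Bijective fun e => (g e, c e, d (f e) (b (c e))) := by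
  obtain ⟨c, hfc, hgc⟩ := exists_bijective_prodMk_and_isKToOne_prodMk hf hg
  let σ : E ≃ A × Fin k := Equiv.ofBijective _ hfc
  obtain ⟨d, hd⟩ := exists_bijective_prodMk_of_pairing (hgc.comp_symm_prodMk (σ := σ)) hb
  have hσ_symm (e : E) : σ.symm (f e, c e) = e := σ.symm_apply_apply e
  refine ⟨c, d, hfc, fun e e' heq => ?_, fun ⟨y, i, t⟩ => ?_⟩
  · simp only [Prod.mk.injEq] at heq
    obtain ⟨hge, hce, hde⟩ := heq
    have hfe : f e = f e' := (hd (c e)).injective <| Prod.ext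
      (by rw [hσ_symm, hge, hce, hσ_symm]) (by rw [hde, hce])
    exact hfc.injective (Prod.ext hfe hce)
  · obtain ⟨x, hx⟩ := (hd i).surjective (y, t)
    obtain ⟨e, he⟩ := hfc.surjective (x, i)
    obtain ⟨rfl, rfl⟩ := Prod.mk.inj he
    exact ⟨e, by rw [← (Prod.mk.inj hx).1, ← (Prod.mk.inj hx).2, hσ_symm]⟩

end KToOne

theorem ncard_sUnion_le_ncard_mul {α : Type*} {P : Set (Set α)} {n : ℕ} (hP : P.Finite)
    (hn : ∀ s ∈ P, s.ncard ≤ n) : (⋃₀ P).ncard ≤ P.ncard * n := by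
  induction P, hP using Set.Finite.induction_on with
  | empty => simp
  | @insert s P hs hP ih =>
    rw [Set.sUnion_insert, Set.ncard_insert_of_notMem hs hP, add_one_mul, add_comm]
    exact (Set.ncard_union_le _ _).trans
      (add_le_add (hn s (Set.mem_insert s P)) (ih fun t ht => hn t (Set.mem_insert_of_mem s ht)))

theorem ncard_insert_range_le {α β : Type*} [Finite β] (x : α) (R : β → α) :
    (insert x (Set.range R)).ncard ≤ Nat.card β + 1 := by
  refine (Set.ncard_insert_le _ _).trans (Nat.add_le_add_right ?_ 1)
  rw [← Set.image_univ, ← Set.ncard_univ]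
  exact Set.ncard_image_le

section Palette

variable {V : Type*} {G : SimpleGraph V}

theorem palette_eq_image_incidenceSet (c : Sym2 V → ℕ) (v : V) :
    palette G c v = c '' G.incidenceSet v := by
  simp only [palette, incidenceSet, Set.image, Set.mem_ofPred_eq, and_assoc]

theorem IsProperEdgeColoring.injOn_incidenceSet {c : Sym2 V → ℕ} (hc : IsProperEdgeColoring G c)
    (v : V) : Set.InjOn c (G.incidenceSet v) := by
  intro e he e' he' heq
  by_contra hne
  exact hc e he.1 e' he'.1 hne ⟨v, he.2, he'.2⟩ heq

theorem ncard_incidenceSet (v : V) [Fintype (G.neighborSet v)] :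
    (G.incidenceSet v).ncard = G.degree v := by
  classical
  rw [← Nat.card_coe_set_eq, Nat.card_eq_fintype_card, card_incidenceSet_eq_degree]

theorem IsProperEdgeColoring.ncard_palette {c : Sym2 V → ℕ} (hc : IsProperEdgeColoring G c) (v : V)
    [Fintype (G.neighborSet v)] : (palette G c v).ncard = G.degree v := by
  rw [palette_eq_image_incidenceSet, (hc.injOn_incidenceSet v).ncard_image, ncard_incidenceSet]

theorem palette_subset_sUnion_image_neighborSet (c : Sym2 V → ℕ) (v : V) :
    palette G c v ⊆ ⋃₀ (palette G c '' G.neighborSet v) := by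
  rintro _ ⟨e, he, hv, rfl⟩
  obtain ⟨w, rfl⟩ := Sym2.mem_iff_exists.1 hv
  exact ⟨_, ⟨w, he, rfl⟩, _, he, Sym2.mem_mk_right v w, rfl⟩

theorem IsProperEdgeColoring.degree_add_le_mul_ncard_range_palette [Finite V] [G.LocallyFinite]
    {c : Sym2 V → ℕ} (hc : IsProperEdgeColoring G c) {a : ℕ} {v : V} (hv : G.degree v ≠ a)
    (hadj : ∀ w, G.Adj v w → G.degree w = a) :
    G.degree v + a ≤ a * (Set.range (palette G c)).ncard := by
  set P : Set (Set ℕ) := palette G c '' G.neighborSet v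
  have hP_card : ∀ s ∈ P, s.ncard = a := by
    rintro _ ⟨w, hw, rfl⟩
    rw [hc.ncard_palette, hadj w hw]
  have hP_finite : (⋃₀ P).Finite := by
    refine (Set.toFinite P).sUnion ?_
    rintro _ ⟨w, -, rfl⟩
    exact palette_eq_image_incidenceSet c w ▸ Set.toFinite _
  have hdegree : G.degree v ≤ P.ncard * a := by
    rw [← hc.ncard_palette v]
    exact (Set.ncard_le_ncard (palette_subset_sUnion_image_neighborSet c v) hP_finite).trans
      (ncard_sUnion_le_ncard_mul (Set.toFinite P) fun s hs => (hP_card s hs).le)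
  have hnotMem : palette G c v ∉ P := fun hmem => hv (hc.ncard_palette v ▸ hP_card _ hmem)
  have hsub : insert (palette G c v) P ⊆ Set.range (palette G c) :=
    Set.insert_subset ⟨v, rfl⟩ (Set.image_subset_range _ _)
  calc G.degree v + a ≤ a * (P.ncard + 1) := by linarith
    _ = a * (insert (palette G c v) P).ncard := by rw [Set.ncard_insert_of_notMem hnotMem]
    _ ≤ a * (Set.range (palette G c)).ncard := by gcongr; exact Set.toFinite _

theorem exists_isProperEdgeColoring_ncard_eq_paletteIndex [Countable V] :
    ∃ c : Sym2 V → ℕ, IsProperEdgeColoring G c ∧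
      (Set.range (palette G c)).ncard = paletteIndex G := by
  obtain ⟨c, hc⟩ := exists_injective_nat (Sym2 V)
  exact Nat.sInf_mem (s := {k | ∃ c : Sym2 V → ℕ, IsProperEdgeColoring G c ∧
    (Set.range (palette G c)).ncard = k}) ⟨_, c, fun _ _ _ _ hne _ => hc.ne hne, rfl⟩

theorem paletteIndex_le_ncard {κ : Type*} [Countable κ] {c : G.edgeSet → κ}
    (hc : ∀ v : V, Set.InjOn c {e | v ∈ (e : Sym2 V)}) {P : Set (Set κ)} (hP : P.Finite)
    (hcP : ∀ v : V, c '' {e | v ∈ (e : Sym2 V)} ∈ P) : paletteIndex G ≤ P.ncard := by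
  obtain ⟨ν, hν⟩ := exists_injective_nat κ
  let φ : Sym2 V → ℕ := extend Subtype.val (ν ∘ c) 0
  have hφ (e : G.edgeSet) : φ e = ν (c e) := Subtype.val_injective.extend_apply _ _ e
  have hproper : IsProperEdgeColoring G φ := by
    rintro e he e' he' hne ⟨v, hv, hv'⟩ heq
    rw [hφ ⟨e, he⟩, hφ ⟨e', he'⟩] at heq
    exact hne (congrArg Subtype.val (hc v hv hv' (hν heq)))
  have hpalette (v : V) : palette G φ v = ν '' (c '' {e | v ∈ (e : Sym2 V)}) := by
    ext n
    constructor
    · rintro ⟨e, he, hv, rfl⟩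
      exact ⟨_, ⟨⟨e, he⟩, hv, rfl⟩, (hφ ⟨e, he⟩).symm⟩
    · rintro ⟨_, ⟨e, hv, rfl⟩, rfl⟩
      exact ⟨e, e.2, hv, hφ e⟩
  have hrange : Set.range (palette G φ) ⊆ Set.image ν '' P := by
    rintro _ ⟨v, rfl⟩
    exact ⟨_, hcP v, (hpalette v).symm⟩
  calc paletteIndex G ≤ (Set.range (palette G φ)).ncard := Nat.sInf_le ⟨φ, hproper, rfl⟩
    _ ≤ (Set.image ν '' P).ncard := Set.ncard_le_ncard hrange (hP.image _)
    _ ≤ P.ncard := Set.ncard_image_le hP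

end Palette

section Biregular

variable {V : Type*} {G : SimpleGraph V}

theorem exists_endpoint_of_isBipartiteWith {X Y : Set V} (h : G.IsBipartiteWith X Y) :
    ∃ f : G.edgeSet → X, ∀ e (x : X), f e = x ↔ (x : V) ∈ (e : Sym2 V) := by
  have hunique (e : G.edgeSet) : ∃ x : X, ∀ x' : X, x = x' ↔ (x' : V) ∈ (e : Sym2 V) := by
    obtain ⟨⟨v, w⟩, hvw⟩ := e
    have hne {x y : V} (hx : x ∈ X) (hy : y ∈ Y) : x ≠ y := h.disjoint.ne_of_mem hx hy
    rcases h.mem_of_adj hvw with ⟨hv, hw⟩ | ⟨hv, hw⟩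
    · exact ⟨⟨v, hv⟩, fun x => by simp [Subtype.ext_iff, hne x.2 hw, eq_comm]⟩
    · exact ⟨⟨w, hw⟩, fun x => by simp [Subtype.ext_iff, hne x.2 hv, eq_comm]⟩
  choose f hf using hunique
  exact ⟨f, hf⟩

theorem isKToOne_endpoint [G.LocallyFinite] {k : ℕ} {X : Set V} {f : G.edgeSet → X}
    (hf : ∀ e (x : X), f e = x ↔ (x : V) ∈ (e : Sym2 V)) (hdeg : ∀ x ∈ X, G.degree x = k) :
    IsKToOne k f := by
  intro x
  have himage : Subtype.val '' (f ⁻¹' {x}) = G.incidenceSet x := by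
    ext e
    constructor
    · rintro ⟨e, he, rfl⟩
      exact ⟨e.2, (hf e x).1 he⟩
    · rintro ⟨he, hx⟩
      exact ⟨⟨e, he⟩, (hf _ x).2 hx, rfl⟩
  rw [← Set.ncard_image_of_injective _ Subtype.val_injective, himage, ncard_incidenceSet,
    hdeg x x.2]

theorem exists_pairing (a : ℕ) :
    ∃ b : Fin a → Fin ((a + 1) / 2), ∀ j, ∃ i₁ i₂, b ⁻¹' {j} ⊆ {i₁, i₂} := by
  refine ⟨fun i => ⟨i / 2, by omega⟩, fun j =>
    ⟨⟨2 * j, by omega⟩, ⟨min (2 * j + 1) (a - 1), by omega⟩, fun i hi => ?_⟩⟩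
  have hij : (i : ℕ) / 2 = j := congrArg Fin.val hi
  simp only [Set.mem_insert_iff, Set.mem_singleton_iff, Fin.ext_iff]
  omega

theorem add_le_mul_paletteIndex_of_isBiregular [Fintype V] [DecidableRel G.Adj] {a b : ℕ}
    (hG : IsBiregular G a b) (hab : a ≠ b) : b + a ≤ a * paletteIndex G := by
  obtain ⟨X, Y, -, ⟨y, hy⟩, hXY, -, hadj, hX, hY⟩ := hG
  have hbip : G.IsBipartiteWith X Y := ⟨Finset.disjoint_coe.2 hXY, hadj⟩
  obtain ⟨c, hc, hcard⟩ := exists_isProperEdgeColoring_ncard_eq_paletteIndex (G := G)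
  rw [← hcard, ← hY y hy]
  exact hc.degree_add_le_mul_ncard_range_palette ((hY y hy).trans_ne hab.symm)
    fun w hw => hX w (hbip.symm.mem_of_mem_adj hy hw)

theorem paletteIndex_le_of_pairing [Fintype V] [DecidableRel G.Adj] {a r : ℕ} {J : Type*} [Finite J]
    (hG : IsBiregular G a (a * r)) {b : Fin a → J} (hb : ∀ j, ∃ i₁ i₂, b ⁻¹' {j} ⊆ {i₁, i₂}) :
    paletteIndex G ≤ r ^ Nat.card J + 1 := by
  obtain ⟨X, Y, -, -, hXY, hcov, hadj, hX, hY⟩ := hG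
  have hbip : G.IsBipartiteWith X Y := ⟨Finset.disjoint_coe.2 hXY, hadj⟩
  obtain ⟨f, hf⟩ := exists_endpoint_of_isBipartiteWith hbip
  obtain ⟨g, hg⟩ := exists_endpoint_of_isBipartiteWith hbip.symm
  obtain ⟨c, d, hfc, hgc⟩ :=
    exists_coloring_of_pairing (isKToOne_endpoint hf hX) (isKToOne_endpoint hg hY) hb
  let col (e : G.edgeSet) : Fin a × Fin r := (c e, d (f e) (b (c e)))
  let pal (t : J → Fin r) : Set (Fin a × Fin r) := Set.range fun i => (i, t (b i))
  have hcol (v : V) : Set.InjOn col {e | v ∈ (e : Sym2 V)} ∧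
      col '' {e | v ∈ (e : Sym2 V)} ∈ insert Set.univ (Set.range pal) := by
    rcases hcov v with hv | hv
    · have hfiber : {e : G.edgeSet | v ∈ (e : Sym2 V)} = f ⁻¹' {⟨v, hv⟩} :=
        Set.ext fun e => (hf e ⟨v, hv⟩).symm
      have himage : col '' (f ⁻¹' {⟨v, hv⟩}) = pal (d ⟨v, hv⟩) :=
        image_preimage_singleton_eq_range_of_bijective_prodMk hfc (fun x i => (i, d x (b i))) _
      have hinj : Set.InjOn (Prod.fst ∘ col) (f ⁻¹' {⟨v, hv⟩}) :=
        (bijOn_preimage_singleton_of_bijective_prodMk hfc _).injOn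
      rw [hfiber, himage]
      exact ⟨hinj.of_comp, Or.inr ⟨_, rfl⟩⟩
    · have hfiber : {e : G.edgeSet | v ∈ (e : Sym2 V)} = g ⁻¹' {⟨v, hv⟩} :=
        Set.ext fun e => (hg e ⟨v, hv⟩).symm
      have hbij := bijOn_preimage_singleton_of_bijective_prodMk hgc ⟨v, hv⟩
      rw [hfiber]
      exact ⟨hbij.injOn, Or.inl hbij.image_eq⟩
  calc paletteIndex G ≤ (insert Set.univ (Set.range pal)).ncard :=
        paletteIndex_le_ncard (fun v => (hcol v).1) (Set.toFinite _) fun v => (hcol v).2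
    _ ≤ Nat.card (J → Fin r) + 1 := ncard_insert_range_le _ _
    _ = r ^ Nat.card J + 1 := by rw [Nat.card_fun, Nat.card_fin]

end Biregular

theorem palette_index_five_biregular_general {V : Type*} [Fintype V] (G : SimpleGraph V)
    [DecidableRel G.Adj] (a r : ℕ) (ha : a ≠ 0) (hr : 2 ≤ r) (hG : IsBiregular G a (a * r)) :
    r + 1 ≤ paletteIndex G ∧ paletteIndex G ≤ r ^ ((a + 1) / 2) + 1 := by
  have hpos : 0 < a := Nat.pos_of_ne_zero ha
  have hlower : a * (r + 1) ≤ a * paletteIndex G :=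
    add_le_mul_paletteIndex_of_isBiregular hG (lt_mul_of_one_lt_right hpos hr).ne
  obtain ⟨b, hb⟩ := exists_pairing a
  have hupper := paletteIndex_le_of_pairing hG hb
  rw [Nat.card_fin] at hupper
  exact ⟨Nat.le_of_mul_le_mul_left hlower hpos, hupper⟩

/-- If `G` is `(5,5r)`-biregular (`r ≥ 2`), then `r + 1 ≤ š(G) ≤ r³ + 1`. -/
theorem palette_index_five_biregular {V : Type*} [Fintype V]
    (G : SimpleGraph V) [DecidableRel G.Adj] (r : ℕ) (hr : 2 ≤ r)
    (hG : IsBiregular G 5 (5 * r)) :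
    r + 1 ≤ paletteIndex G ∧ paletteIndex G ≤ r ^ 3 + 1 :=
  palette_index_five_biregular_general G 5 r (by norm_num) hr hG
end

section
/- Let G be a finite simple graph. Then š(G) = 2 if and only if G is a non-regular graph that is the union of two edge-disjoint regular Class 1 graphs H₁ and H₂ satisfying V(H₁) ⊆ V(H₂); that is, there exist subgraphs H₁ and H₂ of G with V(H₁) ⊆ V(H₂) = V(G), E(H₁) ∩ E(H₂) = ∅, E(G) = E(H₁) ∪ E(H₂), such that each Hᵢ is regular and has chromatic index equal to its maximum degree. -/
open SimpleGraph Finset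

/-!
A coloring with exactly two palettes `A` and `B`, where `|A| ≤ |B|`, can be recolored so that
`A ⊆ B`: send the colors of `A \ B` injectively into `B \ A` and keep all others. The edges with
color in `A` then form a spanning `|A|`-regular subgraph, and those with color in `B \ A` form a
`|B \ A|`-regular subgraph on the vertices with palette `B`; both are Class 1, as the restricted
coloring shows. Conversely, a `d`-regular graph properly colored with `d` colors sees every color
at every vertex, so coloring `H₁` and `H₂` with disjoint sets of colors produces at most two
palettes, one for the vertices of `H₁` and one for the others. A single palette would force `G` to
be regular, since the size of a palette is the degree of its vertex.
-/

theorem exists_injOn_mapsTo_eqOn_id {α : Type*} {A B : Set α} (hA : A.Finite)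
    (h : A.encard ≤ B.encard) :
    ∃ g : α → α, Set.InjOn g A ∧ Set.MapsTo g A B ∧ Set.EqOn g id B := by
  classical
  obtain hα | hα := isEmpty_or_nonempty α
  · exact ⟨id, Set.injOn_id A, fun a _ => hα.elim a, Set.eqOn_refl id B⟩
  obtain ⟨f, hfB, hf⟩ := hA.sdiff.exists_injOn_of_encard_le
    ((Set.encard_le_encard_iff_encard_sdiff_le_encard_sdiff (hA.inter_of_left B)).1 h)
  have hg_id : Set.EqOn (B.piecewise id f) id B := B.piecewise_eqOn id f
  have hg_f : Set.EqOn (B.piecewise id f) f (A \ B) :=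
    (B.piecewise_eqOn_compl id f).mono fun _ ha => ha.2
  refine ⟨B.piecewise id f, ?_, fun a ha => ?_, hg_id⟩
  · rw [← Set.inter_union_sdiff A B, Set.injOn_union Set.disjoint_sdiff_inter.symm]
    refine ⟨(hg_id.mono Set.inter_subset_right).injOn_iff.2 (Set.injOn_id _),
      hg_f.injOn_iff.2 hf, fun a ha b hb hab => ?_⟩
    rw [hg_id ha.2, hg_f hb] at hab
    exact (hfB hb).2 (hab ▸ ha.1)
  · by_cases haB : a ∈ B
    · rwa [hg_id haB]
    · rw [hg_f ⟨ha, haB⟩]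
      exact (hfB ⟨ha, haB⟩).1

section Palette

variable {V : Type*} {G K₁ K₂ : SimpleGraph V} {c c' c₁ c₂ : Sym2 V → ℕ} {v : V}

theorem palette_eq_image_neighborSet (G : SimpleGraph V) (c : Sym2 V → ℕ) (v : V) :
    palette G c v = (fun w => c s(v, w)) '' G.neighborSet v := by
  ext n
  constructor
  · rintro ⟨_, he, ⟨w, rfl⟩, rfl⟩
    exact ⟨w, he, rfl⟩
  · rintro ⟨w, hw, rfl⟩
    exact ⟨s(v, w), hw, Sym2.mem_mk_left v w, rfl⟩

theorem mem_palette_of_adj {w : V} (h : G.Adj v w) : c s(v, w) ∈ palette G c v :=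
  ⟨s(v, w), h, Sym2.mem_mk_left v w, rfl⟩

theorem finite_palette [Finite (G.neighborSet v)] : (palette G c v).Finite := by
  rw [palette_eq_image_neighborSet]
  exact (Set.toFinite _).image _

theorem palette_comp (G : SimpleGraph V) (g : ℕ → ℕ) (c : Sym2 V → ℕ) (v : V) :
    palette G (g ∘ c) v = g '' palette G c v := by
  simp only [palette_eq_image_neighborSet, Set.image_image, Function.comp_apply]

theorem palette_congr (h : Set.EqOn c c' G.edgeSet) (v : V) :
    palette G c v = palette G c' v := by
  simp only [palette_eq_image_neighborSet]
  exact Set.image_congr fun w hw => h hw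

theorem palette_sup (K₁ K₂ : SimpleGraph V) (c : Sym2 V → ℕ) (v : V) :
    palette (K₁ ⊔ K₂) c v = palette K₁ c v ∪ palette K₂ c v := by
  simp only [palette_eq_image_neighborSet, neighborSet_sup, Set.image_union]

namespace IsProperEdgeColoring

theorem injOn_neighborSet (hc : IsProperEdgeColoring G c) (v : V) :
    Set.InjOn (fun w => c s(v, w)) (G.neighborSet v) := by
  intro w hw w' hw' h
  by_contra hne
  exact hc _ hw _ hw' (fun he => hne (Sym2.congr_right.1 he))
    ⟨v, Sym2.mem_mk_left v w, Sym2.mem_mk_left v w'⟩ h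

theorem ncard_palette_s19 (hc : IsProperEdgeColoring G c) (v : V) :
    (palette G c v).ncard = (G.neighborSet v).ncard := by
  rw [palette_eq_image_neighborSet, (hc.injOn_neighborSet v).ncard_image]

theorem ncard_palette_eq_degree [Fintype (G.neighborSet v)] (hc : IsProperEdgeColoring G c) :
    (palette G c v).ncard = G.degree v := by
  rw [hc.ncard_palette_s19, ← card_neighborSet_eq_degree, ← Nat.card_eq_fintype_card,
    Nat.card_coe_set_eq]

theorem palette_eq_Iio {d : ℕ} (hc : IsProperEdgeColoring G c) (hlt : ∀ e ∈ G.edgeSet, c e < d)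
    (hv : (G.neighborSet v).ncard = d) : palette G c v = Set.Iio d := by
  refine Set.eq_of_subset_of_ncard_le ?_ ?_ (Set.finite_Iio d)
  · rintro _ ⟨e, he, -, rfl⟩
    exact hlt e he
  · rw [hc.ncard_palette_s19, hv, Set.ncard_Iio_nat]

theorem comp {g : ℕ → ℕ} (hc : IsProperEdgeColoring G c)
    (hg : ∀ v, Set.InjOn g (palette G c v)) : IsProperEdgeColoring G (g ∘ c) := by
  rintro e₁ he₁ e₂ he₂ hne ⟨v, hv₁, hv₂⟩ h
  exact hc e₁ he₁ e₂ he₂ hne ⟨v, hv₁, hv₂⟩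
    (hg v ⟨e₁, he₁, hv₁, rfl⟩ ⟨e₂, he₂, hv₂, rfl⟩ h)

theorem congr (hc : IsProperEdgeColoring G c) (h : Set.EqOn c c' G.edgeSet) :
    IsProperEdgeColoring G c' := by
  intro e₁ he₁ e₂ he₂ hne hv
  rw [← h he₁, ← h he₂]
  exact hc e₁ he₁ e₂ he₂ hne hv

theorem mono (hc : IsProperEdgeColoring K₂ c) (h : K₁ ≤ K₂) : IsProperEdgeColoring K₁ c :=
  fun e₁ he₁ e₂ he₂ => hc e₁ (edgeSet_mono h he₁) e₂ (edgeSet_mono h he₂)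

theorem sup (hc₁ : IsProperEdgeColoring K₁ c) (hc₂ : IsProperEdgeColoring K₂ c)
    (hdisj : ∀ v, Disjoint (palette K₁ c v) (palette K₂ c v)) :
    IsProperEdgeColoring (K₁ ⊔ K₂) c := by
  rintro e₁ he₁ e₂ he₂ hne ⟨v, hv₁, hv₂⟩
  rw [edgeSet_sup] at he₁ he₂
  rcases he₁ with he₁ | he₁ <;> rcases he₂ with he₂ | he₂
  · exact hc₁ e₁ he₁ e₂ he₂ hne ⟨v, hv₁, hv₂⟩
  · exact (hdisj v).ne_of_mem ⟨e₁, he₁, hv₁, rfl⟩ ⟨e₂, he₂, hv₂, rfl⟩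
  · exact (hdisj v).symm.ne_of_mem ⟨e₁, he₁, hv₁, rfl⟩ ⟨e₂, he₂, hv₂, rfl⟩
  · exact hc₂ e₁ he₁ e₂ he₂ hne ⟨v, hv₁, hv₂⟩

theorem exists_palette_sup_eq {d : ℕ} (hK : Disjoint K₁ K₂)
    (hc₁ : IsProperEdgeColoring K₁ c₁) (hc₂ : IsProperEdgeColoring K₂ c₂)
    (hd : ∀ e ∈ K₁.edgeSet, c₁ e < d) :
    ∃ c, IsProperEdgeColoring (K₁ ⊔ K₂) c ∧
      ∀ v, palette (K₁ ⊔ K₂) c v = palette K₁ c₁ v ∪ (d + ·) '' palette K₂ c₂ v := by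
  classical
  let shifted : Sym2 V → ℕ := (d + ·) ∘ c₂
  let c : Sym2 V → ℕ := K₁.edgeSet.piecewise c₁ shifted
  have h₁ : Set.EqOn c₁ c K₁.edgeSet := (Set.piecewise_eqOn _ _ _).symm
  have h₂ : Set.EqOn shifted c K₂.edgeSet :=
    (Set.piecewise_eqOn_compl _ _ _).symm.mono (disjoint_edgeSet.2 hK).subset_compl_left
  have hshifted : IsProperEdgeColoring K₂ shifted :=
    hc₂.comp fun v => (add_right_injective d).injOn
  have hpalette₂ (v : V) : palette K₂ c v = (d + ·) '' palette K₂ c₂ v := by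
    rw [← palette_congr h₂, palette_comp]
  refine ⟨c, (hc₁.congr h₁).sup (hshifted.congr h₂) fun v => ?_, fun v => ?_⟩
  · rw [hpalette₂, ← palette_congr h₁, Set.disjoint_left]
    rintro _ ⟨e, he, -, rfl⟩ ⟨n, -, hn⟩
    exact absurd (hd e he) (hn ▸ Nat.not_lt.2 (Nat.le_add_right d n))
  · rw [palette_sup, hpalette₂, palette_congr h₁]

theorem exists_range_palette_eq_pair_subset {A B : Set ℕ} (hc : IsProperEdgeColoring G c)
    (hrange : Set.range (palette G c) = {A, B}) (hA : A.Finite) (hle : A.encard ≤ B.encard) :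
    ∃ c', IsProperEdgeColoring G c' ∧ ∃ A' ⊆ B, Set.range (palette G c') = {A', B} := by
  obtain ⟨g, hg_inj, hg_maps, hg_id⟩ := exists_injOn_mapsTo_eqOn_id hA hle
  refine ⟨g ∘ c, hc.comp fun v => ?_, g '' A, hg_maps.image_subset, ?_⟩
  · obtain hv | hv : palette G c v = A ∨ palette G c v = B :=
      hrange.subset (Set.mem_range_self v)
    · rwa [hv]
    · rw [hv]
      exact hg_id.injOn_iff.2 (Set.injOn_id B)
  · calc Set.range (palette G (g ∘ c))
        = Set.image g '' Set.range (palette G c) := by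
          rw [← Set.range_comp]
          exact congrArg Set.range (funext (palette_comp G g c))
      _ = {g '' A, B} := by rw [hrange, Set.image_pair, hg_id.image_eq_self]

end IsProperEdgeColoring

end Palette

section PaletteIndex

variable {V : Type*} {G : SimpleGraph V} {c : Sym2 V → ℕ} {A B : Set ℕ}

theorem exists_isProperEdgeColoring [Countable V] (G : SimpleGraph V) :
    ∃ c, IsProperEdgeColoring G c := by
  obtain ⟨c, hc⟩ := exists_injective_nat (Sym2 V)
  exact ⟨c, fun _ _ _ _ hne _ => hc.ne hne⟩

theorem exists_ncard_range_palette_eq_paletteIndex [Countable V] (G : SimpleGraph V) :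
    ∃ c, IsProperEdgeColoring G c ∧ (Set.range (palette G c)).ncard = paletteIndex G := by
  obtain ⟨c, hc⟩ := exists_isProperEdgeColoring G
  exact Nat.sInf_mem (s := {k | ∃ c, IsProperEdgeColoring G c ∧
    (Set.range (palette G c)).ncard = k}) ⟨_, c, hc, rfl⟩

theorem IsProperEdgeColoring.paletteIndex_le (hc : IsProperEdgeColoring G c) :
    paletteIndex G ≤ (Set.range (palette G c)).ncard :=
  Nat.sInf_le ⟨c, hc, rfl⟩

theorem exists_degree_eq_of_paletteIndex_le_one [Finite V] [G.LocallyFinite]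
    (h : paletteIndex G ≤ 1) : ∃ d, ∀ v, G.degree v = d := by
  obtain ⟨c, hc, hcard⟩ := exists_ncard_range_palette_eq_paletteIndex G
  have hsub : (Set.range (palette G c)).Subsingleton :=
    Set.ncard_le_one_iff_subsingleton.1 (hcard.trans_le h)
  obtain hV | ⟨⟨u⟩⟩ := isEmpty_or_nonempty V
  · exact ⟨0, hV.elim⟩
  · refine ⟨G.degree u, fun v => ?_⟩
    rw [← hc.ncard_palette_eq_degree, ← hc.ncard_palette_eq_degree,
      hsub (Set.mem_range_self v) (Set.mem_range_self u)]

theorem exists_range_palette_eq_pair_ssubset_of_paletteIndex_eq_two [Finite V]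
    (h : paletteIndex G = 2) :
    ∃ c A B, IsProperEdgeColoring G c ∧ A ⊂ B ∧ Set.range (palette G c) = {A, B} := by
  obtain ⟨c, hc, hcard⟩ := exists_ncard_range_palette_eq_paletteIndex G
  obtain ⟨A, B, -, hrange⟩ := Set.ncard_eq_two.1 (hcard.trans h)
  wlog hle : A.encard ≤ B.encard generalizing A B
  · exact this B A (hrange.trans (Set.pair_comm A B)) (le_of_not_ge hle)
  have hA : A.Finite := by
    obtain ⟨v, rfl⟩ : A ∈ Set.range (palette G c) := hrange ▸ Set.mem_insert A {B}
    exact finite_palette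
  obtain ⟨c', hc', A', hA'B, hrange'⟩ := hc.exists_range_palette_eq_pair_subset hrange hA hle
  refine ⟨c', A', B, hc', hA'B.ssubset_of_ne ?_, hrange'⟩
  rintro rfl
  have hone := hc'.paletteIndex_le
  rw [hrange', Set.pair_eq_singleton, Set.ncard_singleton] at hone
  lia

theorem IsProperEdgeColoring.not_exists_degree_eq [G.LocallyFinite]
    (hc : IsProperEdgeColoring G c) (hAB : A ⊂ B) (hrange : Set.range (palette G c) = {A, B}) :
    ¬ ∃ d, ∀ v, G.degree v = d := by
  rintro ⟨d, hd⟩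
  obtain ⟨a, rfl⟩ : A ∈ Set.range (palette G c) := hrange ▸ Set.mem_insert A {B}
  obtain ⟨b, rfl⟩ : B ∈ Set.range (palette G c) := hrange ▸ Set.mem_insert_of_mem _ rfl
  have hlt := Set.ncard_lt_ncard hAB finite_palette
  rw [hc.ncard_palette_eq_degree, hc.ncard_palette_eq_degree, hd, hd] at hlt
  exact hlt.false

end PaletteIndex

section RegularClassOne

variable {V : Type*} {G : SimpleGraph V} {H H₁ H₂ : G.Subgraph} {c : Sym2 V → ℕ} {d₁ d₂ : ℕ}
  {A B S : Set ℕ} {v : V}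

/-- `H` is a `d`-regular Class 1 graph. Since a proper edge coloring of a nonempty `d`-regular
graph uses at least `d` colors, being Class 1 only asks for a coloring with the colors
`0, …, d - 1`. -/
def IsRegularClassOne (H : G.Subgraph) (d : ℕ) : Prop :=
  (∀ v ∈ H.verts, (H.neighborSet v).ncard = d) ∧
    ∃ c : Sym2 V → ℕ, (∀ e ∈ H.edgeSet, c e < d) ∧ IsProperEdgeColoring H.spanningCoe c

theorem palette_spanningCoe_eq_empty (hv : v ∉ H.verts) : palette H.spanningCoe c v = ∅ :=
  Set.eq_empty_of_forall_notMem fun _ ⟨_, he, hve, _⟩ =>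
    hv (Subgraph.mem_verts_of_mem_edge he hve)

theorem IsProperEdgeColoring.isRegularClassOne_ncard (hc : IsProperEdgeColoring H.spanningCoe c)
    (hS : S.Finite) (hpalette : ∀ v ∈ H.verts, palette H.spanningCoe c v = S) :
    IsRegularClassOne H S.ncard := by
  obtain ⟨f, hf_maps, hf_inj⟩ := hS.exists_injOn_of_encard_le (t := Set.Iio S.ncard) <| by
    rw [← hS.cast_ncard_eq, ← (Set.finite_Iio _).cast_ncard_eq, Set.ncard_Iio_nat]
  have hsub (v : V) : palette H.spanningCoe c v ⊆ S := by
    by_cases hv : v ∈ H.verts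
    · exact (hpalette v hv).subset
    · rw [palette_spanningCoe_eq_empty hv]
      exact Set.empty_subset S
  refine ⟨fun v hv => ?_, f ∘ c, fun e he => ?_, hc.comp fun v => hf_inj.mono (hsub v)⟩
  · rw [← hpalette v hv]
    exact (hc.ncard_palette_s19 v).symm
  · exact hf_maps (hsub e.out.1 ⟨e, he, e.out_fst_mem, rfl⟩)

theorem paletteIndex_le_two_of_isRegularClassOne (hspan : H₂.verts = Set.univ)
    (hdisj : Disjoint H₁.edgeSet H₂.edgeSet) (hunion : H₁.edgeSet ∪ H₂.edgeSet = G.edgeSet)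
    (h₁ : IsRegularClassOne H₁ d₁) (h₂ : IsRegularClassOne H₂ d₂) : paletteIndex G ≤ 2 := by
  obtain ⟨hreg₁, c₁, hlt₁, hc₁⟩ := h₁
  obtain ⟨hreg₂, c₂, hlt₂, hc₂⟩ := h₂
  have hG : H₁.spanningCoe ⊔ H₂.spanningCoe = G :=
    edgeSet_injective ((edgeSet_sup _ _).trans hunion)
  obtain ⟨c, hc, hpalette⟩ := hc₁.exists_palette_sup_eq (disjoint_edgeSet.1 hdisj) hc₂ hlt₁
  rw [hG] at hc hpalette
  let T : Set ℕ := (d₁ + ·) '' Set.Iio d₂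
  have hpalette₂ (v : V) : palette H₂.spanningCoe c₂ v = Set.Iio d₂ :=
    hc₂.palette_eq_Iio hlt₂ (hreg₂ v (hspan ▸ Set.mem_univ v))
  have hrange : Set.range (palette G c) ⊆ {Set.Iio d₁ ∪ T, T} := by
    rintro _ ⟨v, rfl⟩
    rw [hpalette, hpalette₂]
    by_cases hv : v ∈ H₁.verts
    · rw [hc₁.palette_eq_Iio hlt₁ (hreg₁ v hv)]
      exact Set.mem_insert _ _
    · rw [palette_spanningCoe_eq_empty hv, Set.empty_union]
      exact Set.mem_insert_of_mem _ rfl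
  calc paletteIndex G ≤ (Set.range (palette G c)).ncard := hc.paletteIndex_le
    _ ≤ ({Set.Iio d₁ ∪ T, T} : Set (Set ℕ)).ncard := Set.ncard_le_ncard hrange
    _ ≤ ({T} : Set (Set ℕ)).ncard + 1 := Set.ncard_insert_le _ _
    _ = 2 := by rw [Set.ncard_singleton]

/-- The subgraph of `G` formed by the edges with color in `S`, on the vertices whose palette
contains `S`. As every palette contains `S` or is disjoint from it, these vertices include all
endpoints of such edges; vertices without such an edge are kept only if `S = ∅`. -/
def colorSubgraph (G : SimpleGraph V) (c : Sym2 V → ℕ) (S : Set ℕ)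
    (h : ∀ v, S ⊆ palette G c v ∨ Disjoint S (palette G c v)) : G.Subgraph where
  verts := {v | S ⊆ palette G c v}
  Adj v w := G.Adj v w ∧ c s(v, w) ∈ S
  adj_sub hvw := hvw.1
  edge_vert {v _} hvw := (h v).resolve_right <|
    Set.not_disjoint_iff.2 ⟨_, hvw.2, mem_palette_of_adj hvw.1⟩
  symm := ⟨fun _ _ hvw => ⟨hvw.1.symm, Sym2.eq_swap ▸ hvw.2⟩⟩

variable (h : ∀ v, S ⊆ palette G c v ∨ Disjoint S (palette G c v))

theorem edgeSet_colorSubgraph : (colorSubgraph G c S h).edgeSet = G.edgeSet ∩ c ⁻¹' S := by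
  ext ⟨v, w⟩
  rfl

theorem palette_colorSubgraph (hv : S ⊆ palette G c v) :
    palette (colorSubgraph G c S h).spanningCoe c v = S := by
  refine Set.Subset.antisymm ?_ fun n hn => ?_
  · rintro _ ⟨e, he, -, rfl⟩
    exact ((edgeSet_colorSubgraph h).subset he).2
  · obtain ⟨e, he, hve, rfl⟩ := hv hn
    exact ⟨e, (edgeSet_colorSubgraph h).superset ⟨he, hn⟩, hve, rfl⟩

theorem IsProperEdgeColoring.isRegularClassOne_colorSubgraph (hc : IsProperEdgeColoring G c)
    (hS : S.Finite) : IsRegularClassOne (colorSubgraph G c S h) S.ncard :=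
  (hc.mono (Subgraph.spanningCoe_le _)).isRegularClassOne_ncard hS
    fun _ hv => palette_colorSubgraph h hv

theorem IsProperEdgeColoring.exists_isRegularClassOne_union (hc : IsProperEdgeColoring G c)
    (hB : B.Finite) (hAB : A ⊆ B) (hrange : Set.range (palette G c) = {A, B}) :
    ∃ (H₁ H₂ : G.Subgraph) (d₁ d₂ : ℕ), H₂.verts = Set.univ ∧
      Disjoint H₁.edgeSet H₂.edgeSet ∧ H₁.edgeSet ∪ H₂.edgeSet = G.edgeSet ∧
      IsRegularClassOne H₁ d₁ ∧ IsRegularClassOne H₂ d₂ := by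
  have hpalette (v : V) : palette G c v = A ∨ palette G c v = B :=
    hrange.subset (Set.mem_range_self v)
  have hA (v : V) : A ⊆ palette G c v :=
    (hpalette v).elim Eq.superset fun hv => hAB.trans hv.superset
  have hBA (v : V) : B \ A ⊆ palette G c v ∨ Disjoint (B \ A) (palette G c v) :=
    (hpalette v).symm.imp (fun hv => Set.sdiff_subset.trans hv.superset)
      fun hv => Set.disjoint_sdiff_left.mono_right hv.subset
  have hcolors : G.edgeSet ⊆ c ⁻¹' B := fun e he => by
    have hmem : c e ∈ palette G c e.out.1 := ⟨e, he, e.out_fst_mem, rfl⟩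
    exact (hpalette e.out.1).elim (fun hv => hAB (hv ▸ hmem)) fun hv => hv ▸ hmem
  refine ⟨colorSubgraph G c (B \ A) hBA, colorSubgraph G c A fun v => .inl (hA v), _, _,
    Set.eq_univ_of_forall hA, ?_, ?_, hc.isRegularClassOne_colorSubgraph _ hB.sdiff,
    hc.isRegularClassOne_colorSubgraph _ (hB.subset hAB)⟩
  · rw [edgeSet_colorSubgraph, edgeSet_colorSubgraph]
    exact (Set.disjoint_sdiff_left.preimage c).mono Set.inter_subset_right Set.inter_subset_right
  · rw [edgeSet_colorSubgraph, edgeSet_colorSubgraph, ← Set.inter_union_distrib_left,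
      ← Set.preimage_union, Set.sdiff_union_of_subset hAB, Set.inter_eq_left.2 hcolors]

end RegularClassOne

/-- `š(G) = 2` iff `G` is a non-regular graph which is the union of two edge-disjoint
regular Class 1 graphs `H₁`, `H₂` with `V(H₁) ⊆ V(H₂) = V(G)`: here `Hᵢ` is `dᵢ`-regular,
and being Class 1 (`χ'(Hᵢ) = Δ(Hᵢ) = dᵢ`) is expressed as admitting a proper edge
coloring with `dᵢ` colors. -/
theorem palette_index_eq_two_iff {V : Type*} [Fintype V]
    (G : SimpleGraph V) [DecidableRel G.Adj] :
    paletteIndex G = 2 ↔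
      ((¬ ∃ d : ℕ, ∀ v : V, G.degree v = d) ∧
        ∃ (H₁ H₂ : G.Subgraph) (d₁ d₂ : ℕ),
          H₁.verts ⊆ H₂.verts ∧ H₂.verts = Set.univ ∧
          Disjoint H₁.edgeSet H₂.edgeSet ∧
          H₁.edgeSet ∪ H₂.edgeSet = G.edgeSet ∧
          (∀ v ∈ H₁.verts, (H₁.neighborSet v).ncard = d₁) ∧
          (∀ v ∈ H₂.verts, (H₂.neighborSet v).ncard = d₂) ∧
          (∃ c : Sym2 V → ℕ, (∀ e ∈ H₁.edgeSet, c e < d₁) ∧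
            ∀ e₁ ∈ H₁.edgeSet, ∀ e₂ ∈ H₁.edgeSet,
              e₁ ≠ e₂ → (∃ v, v ∈ e₁ ∧ v ∈ e₂) → c e₁ ≠ c e₂) ∧
          (∃ c : Sym2 V → ℕ, (∀ e ∈ H₂.edgeSet, c e < d₂) ∧
            ∀ e₁ ∈ H₂.edgeSet, ∀ e₂ ∈ H₂.edgeSet,
              e₁ ≠ e₂ → (∃ v, v ∈ e₁ ∧ v ∈ e₂) → c e₁ ≠ c e₂)) := by
  constructor
  · intro h
    obtain ⟨c, A, B, hc, hAB, hrange⟩ :=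
      exists_range_palette_eq_pair_ssubset_of_paletteIndex_eq_two h
    obtain ⟨b, hb⟩ : B ∈ Set.range (palette G c) := hrange ▸ Set.mem_insert_of_mem _ rfl
    obtain ⟨H₁, H₂, d₁, d₂, hspan, hdisj, hunion, h₁, h₂⟩ :=
      hc.exists_isRegularClassOne_union (hb ▸ finite_palette) hAB.subset hrange
    exact ⟨hc.not_exists_degree_eq hAB hrange, H₁, H₂, d₁, d₂, hspan ▸ Set.subset_univ _, hspan,
      hdisj, hunion, h₁.1, h₂.1, h₁.2, h₂.2⟩
  · rintro ⟨hirreg, H₁, H₂, d₁, d₂, -, hspan, hdisj, hunion, hreg₁, hreg₂, hcol₁, hcol₂⟩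
    have hle : paletteIndex G ≤ 2 := paletteIndex_le_two_of_isRegularClassOne hspan hdisj hunion
      ⟨hreg₁, hcol₁⟩ ⟨hreg₂, hcol₂⟩
    have hne : ¬ paletteIndex G ≤ 1 := fun h => hirreg (exists_degree_eq_of_paletteIndex_le_one h)
    lia
end
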